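/- arXiv:2209.00038 — 2 statements merged into one kernel-verified Lean document; each statement's English description precedes it below -/
import Mathlib

section
/- The quotient φ_{0,3/2}(τ,z) = ϑ(τ,2z)/ϑ(τ,z) satisfies the first-order modular differential equation H^{(3/2)}(φ_{0,3/2})(τ,z) + (1/2)·E₂(τ)·φ_{0,3/2}(τ,z) = 0 at every point (τ,z) ∈ ℍ × ℂ with ϑ(τ,z) ≠ 0. -/
/-!
The quintuple product identity gives `ϑ(τ,2z)/ϑ(τ,z) = S(τ,z)/η(τ)`, where
`S = ∑ (-1)^n (q^{(6n+1)²/24} ζ^{(6n+1)/2} + q^{(6n-1)²/24} ζ^{(6n-1)/2})`. Every term `q^{r²/6} ζ^r`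
of `S` is annihilated by the heat operator of index `3/2` (`gTheta_heat`). Hence
`H(S/η) = -(12/(2πi)) (η'/η) (S/η)`, which is `-(1/2) E₂ S/η` because `η'/η = (πi/12) E₂`.

The identity `ϑ(τ,z) S(τ,z) = η(τ) ϑ(τ,2z)` (`quintuple`) is proved by multiplying the two series on
the left and collecting the powers of `ζ`. The quadratic form in the exponent of `q` splits as
`u²/8 + 3v²/8`, with `u` the exponent of `ζ`; for even `u` the sum over `v` cancels, and for odd `u`
it is the pentagonal series `∑ (-1)^n q^{(6n+1)²/24}` up to sign. The latter equals `η` by Euler's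
pentagonal number theorem (`euler_pentagonal`, `eta_eq_gTheta`).
-/

open Complex Real

noncomputable section

/-- The Jacobi theta series `ϑ(τ,z) = q^{1/8} ζ^{1/2} ∑_{n∈ℤ} (−1)^n q^{n(n+1)/2} ζ^n`
with `q = e^{2πiτ}`, `ζ = e^{2πiz}`. -/
def thetaJ (τ z : ℂ) : ℂ :=
  Complex.exp (π * I * τ / 4) * Complex.exp (π * I * z) *
    ∑' n : ℤ, (-1 : ℂ) ^ n * Complex.exp (π * I * τ * n * (n + 1)) *
      Complex.exp (2 * π * I * z * n)

/-- The Dedekind eta function `η(τ) = q^{1/24} ∏_{n≥1} (1 − q^n)`. -/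
def etaD (τ : ℂ) : ℂ :=
  Complex.exp (π * I * τ / 12) * ∏' n : ℕ, (1 - Complex.exp (2 * π * I * τ * (n + 1)))

/-- The divisor power sum `σ_k(n) = ∑_{d ∣ n} d^k`. -/
def sigmaD (k n : ℕ) : ℕ := ∑ d ∈ n.divisors, d ^ k

/-- The quasi-modular Eisenstein series `E₂`. -/
def Eis2 (τ : ℂ) : ℂ :=
  1 - 24 * ∑' n : ℕ, (sigmaD 1 (n + 1) : ℂ) * Complex.exp (2 * π * I * τ * (n + 1))

/-- The Eisenstein series `E₄`. -/
def Eis4 (τ : ℂ) : ℂ :=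
  1 + 240 * ∑' n : ℕ, (sigmaD 3 (n + 1) : ℂ) * Complex.exp (2 * π * I * τ * (n + 1))

/-- The Eisenstein series `E₆`. -/
def Eis6 (τ : ℂ) : ℂ :=
  1 - 504 * ∑' n : ℕ, (sigmaD 5 (n + 1) : ℂ) * Complex.exp (2 * π * I * τ * (n + 1))

/-- The heat operator `H^{(m)}φ = (12/(2πi)) ∂φ/∂τ + (3/(4π²m)) ∂²φ/∂z²` of index `m`. -/
def heatOp (m : ℚ) (φ : ℂ → ℂ → ℂ) (τ z : ℂ) : ℂ :=
  12 / (2 * π * I) * deriv (fun t => φ t z) τ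
    + 3 / (4 * π ^ 2 * (m : ℂ)) * deriv (deriv (φ τ)) z

/-- The modular heat operator `H^{(m)}_k φ = H^{(m)}φ − ((2k−1)/2)·E₂·φ`. -/
def heatMod (m k : ℚ) (φ : ℂ → ℂ → ℂ) (τ z : ℂ) : ℂ :=
  heatOp m φ τ z - (2 * (k : ℂ) - 1) / 2 * Eis2 τ * φ τ z

/-- The weak Jacobi form `φ_{0,3/2}(τ,z) = ϑ(τ,2z)/ϑ(τ,z)` of weight 0 and index 3/2. -/
def phi032 (τ z : ℂ) : ℂ := thetaJ τ (2 * z) / thetaJ τ z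

/-! ### Theta series with characteristic and the heat equation -/

/-- The `n`-th term of the theta series with characteristic `c` and index `A / 2`, that is
`(-1)^n q^{A(n+c)²/2} ζ^{A(n+c)}`. -/
def gTerm (A c : ℝ) (τ z : ℂ) (n : ℤ) : ℂ :=
  (-1 : ℂ) ^ n * cexp (π * I * A * τ * (n + c) ^ 2 + 2 * π * I * A * z * (n + c))

/-- The signed theta series `∑ (-1)^n q^{A(n+c)²/2} ζ^{A(n+c)}`. For `(A, c) = (1, 1/2)` it is the
Jacobi theta series, and for `(A, c) = (3, 1/6)` at `z = 0` it is `η`. -/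
def gTheta (A c : ℝ) (τ z : ℂ) : ℂ := ∑' n : ℤ, gTerm A c τ z n

lemma gauss_summable {a b c : ℝ} (ha : 0 < a) (hb : 0 ≤ b) (hc : |c| ≤ 1) :
    Summable fun n : ℤ => rexp (-a * (n + c) ^ 2 + b * |n + c|) := by
  have h := (summable_pow_mul_jacobiTheta₂_term_bound ((2 * a + b) / (2 * π))
    (div_pos ha pi_pos) 0).mul_left (rexp b)
  refine Summable.of_nonneg_of_le (fun _ => (Real.exp_pos _).le) (fun n => ?_) h
  rw [pow_zero, one_mul, ← Real.exp_add, Real.exp_le_exp]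
  have e : -π * (a / π * (n : ℝ) ^ 2 - 2 * ((2 * a + b) / (2 * π)) * |(n : ℝ)|)
      = -a * n ^ 2 + (2 * a + b) * |(n : ℝ)| := by
    field_simp; ring
  push_cast at e ⊢
  rw [e]
  have h1 : |(n : ℝ) + c| ≤ |(n : ℝ)| + 1 := (abs_add_le _ _).trans (by linarith)
  have h2 : -(2 * |(n : ℝ)|) ≤ 2 * n * c := by
    have : |2 * (n : ℝ) * c| ≤ 2 * |(n : ℝ)| := by
      rw [abs_mul, abs_mul, abs_two]
      exact mul_le_of_le_one_right (by positivity) hc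
    linarith [neg_abs_le (2 * (n : ℝ) * c)]
  have h3 : (n : ℝ) ^ 2 - 2 * |(n : ℝ)| ≤ (n + c) ^ 2 := by nlinarith [sq_nonneg c]
  nlinarith [mul_le_mul_of_nonneg_left h1 hb, mul_le_mul_of_nonneg_left h3 ha.le]

lemma norm_gTerm (A c : ℝ) (τ z : ℂ) (n : ℤ) :
    ‖gTerm A c τ z n‖ = rexp (-(π * A * τ.im) * (n + c) ^ 2 - 2 * π * A * z.im * (n + c)) := by
  rw [gTerm, norm_mul, norm_zpow, norm_neg, norm_one, one_zpow, one_mul, Complex.norm_exp]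
  congr 1
  have e : (π * I * A * τ * (n + c) ^ 2 + 2 * π * I * A * z * (n + c) : ℂ)
      = ((π * A * (n + c) ^ 2 : ℝ) : ℂ) * (τ * I) + ((2 * π * A * (n + c) : ℝ) : ℂ) * (z * I) := by
    push_cast; ring
  rw [e, add_re, re_ofReal_mul, re_ofReal_mul, mul_I_re, mul_I_re]
  ring

/-- A bound locally uniform in `(τ, z)`, summable over `n` by `gauss_summable`. -/
lemma norm_gTerm_le {A c T S : ℝ} (hA : 0 < A) {τ z : ℂ} (hτ : T ≤ τ.im) (hz : |z.im| ≤ S)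
    (n : ℤ) : ‖gTerm A c τ z n‖
      ≤ rexp (-(π * A * T) * (n + c) ^ 2 + 2 * π * A * S * |n + c|) := by
  rw [norm_gTerm, Real.exp_le_exp]
  have h1 : -(z.im * (n + c)) ≤ S * |(n : ℝ) + c| := by
    refine (neg_le_abs _).trans ?_
    rw [abs_mul]
    gcongr
  have h2 : 0 < π * A := mul_pos pi_pos hA
  have h3 := mul_le_mul_of_nonneg_left h1 h2.le
  have h4 := mul_le_mul_of_nonneg_left hτ (mul_nonneg h2.le (sq_nonneg ((n : ℝ) + c)))
  nlinarith

lemma summable_norm_gTerm {A c : ℝ} (hA : 0 < A) (hc : |c| ≤ 1) {τ : ℂ} (hτ : 0 < τ.im) (z : ℂ) :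
    Summable fun n => ‖gTerm A c τ z n‖ :=
  Summable.of_nonneg_of_le (fun _ => norm_nonneg _)
    (fun n => norm_gTerm_le hA le_rfl le_rfl n)
    (gauss_summable (by positivity) (by positivity) hc)

lemma hasDerivAt_gTerm_z (A c : ℝ) (τ z : ℂ) (n : ℤ) :
    HasDerivAt (fun w => gTerm A c τ w n) (2 * π * I * A * (n + c) * gTerm A c τ z n) z := by
  unfold gTerm
  have h : HasDerivAt (fun w : ℂ => π * I * A * τ * (n + c) ^ 2 + 2 * π * I * A * w * (n + c))
      (2 * π * I * A * (n + c)) z := by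
    simpa using (((hasDerivAt_id z).const_mul (2 * π * I * A : ℂ)).mul_const
      ((n : ℂ) + c)).const_add (π * I * A * τ * (n + c) ^ 2 : ℂ)
  exact (h.cexp.const_mul _).congr_deriv (by ring)

lemma hasDerivAt_gTerm_t (A c : ℝ) (τ z : ℂ) (n : ℤ) :
    HasDerivAt (fun t => gTerm A c t z n) (π * I * A * (n + c) ^ 2 * gTerm A c τ z n) τ := by
  unfold gTerm
  have h : HasDerivAt (fun t : ℂ => π * I * A * t * (n + c) ^ 2 + 2 * π * I * A * z * (n + c))
      (π * I * A * (n + c) ^ 2) τ := by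
    simpa using (((hasDerivAt_id τ).const_mul (π * I * A : ℂ)).mul_const
      (((n : ℂ) + c) ^ 2)).add_const (2 * π * I * A * z * (n + c) : ℂ)
  exact (h.cexp.const_mul _).congr_deriv (by ring)

/-- The termwise `z`-derivative of `gTheta`. -/
def gTheta' (A c : ℝ) (τ z : ℂ) : ℂ := ∑' n : ℤ, 2 * π * I * A * (n + c) * gTerm A c τ z n

lemma isOpen_strip (S : ℝ) : IsOpen {w : ℂ | |w.im| < S} :=
  isOpen_lt (by fun_prop) continuous_const

lemma hasDerivAt_gTheta_z {A c : ℝ} (hA : 0 < A) (hc : |c| ≤ 1) {τ : ℂ} (hτ : 0 < τ.im) (z : ℂ) :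
    HasDerivAt (gTheta A c τ) (gTheta' A c τ z) z := by
  have hs : 0 ≤ |z.im| + 1 := by positivity
  have hu : Summable fun n : ℤ => rexp (-(π * A * τ.im) * (n + c) ^ 2
      + 2 * π * A * (|z.im| + 1) * |n + c|) :=
    gauss_summable (by positivity) (by positivity) hc
  have hd (n : ℤ) : DifferentiableOn ℂ (fun w => gTerm A c τ w n) {w : ℂ | |w.im| < |z.im| + 1} :=
    fun w _ => (hasDerivAt_gTerm_z A c τ w n).differentiableAt.differentiableWithinAt
  have hb (n : ℤ) (w : ℂ) (hw : w ∈ {w : ℂ | |w.im| < |z.im| + 1}) :=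
    norm_gTerm_le (c := c) hA (le_refl τ.im) (le_of_lt hw) n
  have hm : z ∈ {w : ℂ | |w.im| < |z.im| + 1} := by simp
  have h1 := differentiableOn_tsum_of_summable_norm hu hd (isOpen_strip _) hb
  have h2 := hasSum_deriv_of_summable_norm hu hd (isOpen_strip _) hb hm
  have h3 := (h1.differentiableAt ((isOpen_strip _).mem_nhds hm)).hasDerivAt
  rw [← h2.tsum_eq] at h3
  simp only [(hasDerivAt_gTerm_z A c τ z _).deriv] at h3
  exact h3

lemma hasDerivAt_gTheta'_z {A c : ℝ} (hA : 0 < A) (hc : |c| ≤ 1) {τ : ℂ} (hτ : 0 < τ.im) (z : ℂ) :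
    HasDerivAt (gTheta' A c τ)
      (∑' n : ℤ, (2 * π * I * A * (n + c)) ^ 2 * gTerm A c τ z n) z := by
  have hs : 0 ≤ |z.im| + 1 := by positivity
  have hu : Summable fun n : ℤ => 2 * π * A * rexp (-(π * A * τ.im) * (n + c) ^ 2
      + (2 * π * A * (|z.im| + 1) + 1) * |n + c|) :=
    (gauss_summable (by positivity) (by positivity) hc).mul_left _
  have hd' (n : ℤ) (w : ℂ) : HasDerivAt (fun w => 2 * π * I * A * (n + c) * gTerm A c τ w n)
      ((2 * π * I * A * (n + c)) ^ 2 * gTerm A c τ w n) w :=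
    ((hasDerivAt_gTerm_z A c τ w n).const_mul _).congr_deriv (by ring)
  have hd (n : ℤ) : DifferentiableOn ℂ (fun w => 2 * π * I * A * (n + c) * gTerm A c τ w n)
      {w : ℂ | |w.im| < |z.im| + 1} :=
    fun w _ => (hd' n w).differentiableAt.differentiableWithinAt
  have hb (n : ℤ) (w : ℂ) (hw : w ∈ {w : ℂ | |w.im| < |z.im| + 1}) :
      ‖2 * π * I * A * (n + c) * gTerm A c τ w n‖ ≤ 2 * π * A * rexp (-(π * A * τ.im) * (n + c) ^ 2
      + (2 * π * A * (|z.im| + 1) + 1) * |n + c|) := by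
    have e : ‖(2 * π * I * A * (n + c) : ℂ)‖ = 2 * π * A * |n + c| := by
      have : (2 * π * I * A * (n + c) : ℂ) = ((2 * π * A * (n + c) : ℝ) : ℂ) * I := by
        push_cast; ring
      rw [this, norm_mul, norm_I, mul_one, norm_real, Real.norm_eq_abs, abs_mul,
        abs_of_pos (by positivity)]
    -- The linear factor `|n + c|` is absorbed by `exp |n + c|`.
    rw [norm_mul, e, mul_assoc, add_mul, ← add_assoc, Real.exp_add, mul_comm (rexp _), one_mul]
    have h5 : |(n : ℝ) + c| ≤ rexp |n + c| := by linarith [Real.add_one_le_exp |(n : ℝ) + c|]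
    have := norm_gTerm_le (c := c) hA (le_refl τ.im) (le_of_lt hw) n
    gcongr
  have hm : z ∈ {w : ℂ | |w.im| < |z.im| + 1} := by simp
  have h1 := differentiableOn_tsum_of_summable_norm hu hd (isOpen_strip _) hb
  have h2 := hasSum_deriv_of_summable_norm hu hd (isOpen_strip _) hb hm
  have h3 := (h1.differentiableAt ((isOpen_strip _).mem_nhds hm)).hasDerivAt
  rw [← h2.tsum_eq] at h3
  simp only [(hd' _ z).deriv] at h3
  exact h3

lemma hasDerivAt_gTheta_t {A c : ℝ} (hA : 0 < A) (hc : |c| ≤ 1) {τ : ℂ} (hτ : 0 < τ.im) (z : ℂ) :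
    HasDerivAt (fun t => gTheta A c t z)
      (∑' n : ℤ, π * I * A * (n + c) ^ 2 * gTerm A c τ z n) τ := by
  have hu : Summable fun n : ℤ => rexp (-(π * A * (τ.im / 2)) * (n + c) ^ 2
      + 2 * π * A * |z.im| * |n + c|) :=
    gauss_summable (by positivity) (by positivity) hc
  have hd (n : ℤ) : DifferentiableOn ℂ (fun t => gTerm A c t z n) {t : ℂ | τ.im / 2 < t.im} :=
    fun t _ => (hasDerivAt_gTerm_t A c t z n).differentiableAt.differentiableWithinAt
  have ho : IsOpen {t : ℂ | τ.im / 2 < t.im} := isOpen_lt continuous_const (by fun_prop)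
  have hb (n : ℤ) (t : ℂ) (ht : t ∈ {t : ℂ | τ.im / 2 < t.im}) :=
    norm_gTerm_le (c := c) hA (le_of_lt ht) (le_refl |z.im|) n
  have hm : τ ∈ {t : ℂ | τ.im / 2 < t.im} := by simpa using hτ
  have h1 := differentiableOn_tsum_of_summable_norm hu hd ho hb
  have h2 := hasSum_deriv_of_summable_norm hu hd ho hb hm
  have h3 := (h1.differentiableAt (ho.mem_nhds hm)).hasDerivAt
  rw [← h2.tsum_eq] at h3
  simp only [(hasDerivAt_gTerm_t A c τ z _).deriv] at h3
  exact h3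

/-- The heat equation `∂²F/∂z² = 4πiA ∂F/∂τ` for `F = gTheta A c`. -/
lemma gTheta_heat {A c : ℝ} (hA : 0 < A) (hc : |c| ≤ 1) {τ : ℂ} (hτ : 0 < τ.im) (z : ℂ) :
    HasDerivAt (gTheta' A c τ) (4 * π * I * A * deriv (fun t => gTheta A c t z) τ) z := by
  refine (hasDerivAt_gTheta'_z hA hc hτ z).congr_deriv ?_
  rw [(hasDerivAt_gTheta_t hA hc hτ z).deriv, ← tsum_mul_left]
  exact tsum_congr fun n => by ring

/-! ### The quintuple product identity -/

lemma tsum_int_even_add_odd {f : ℤ → ℂ} (hf : Summable f) :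
    ∑' n, f n = ∑' k, f (2 * k) + ∑' k, f (2 * k + 1) := by
  have i0 : Function.Injective fun k : ℤ => 2 * k := fun a b h => by simpa using h
  have i1 : Function.Injective fun k : ℤ => 2 * k + 1 := fun a b h => by simpa using h
  have h0 := (hf.comp_injective i0).hasSum
  have h1 := (hf.comp_injective i1).hasSum
  have e0 : (Set.range fun k : ℤ => 2 * k) = {n | Even n} := by
    ext n; simp [even_iff_exists_two_mul, eq_comm]
  have e1 : (Set.range fun k : ℤ => 2 * k + 1) = {n | Odd n} := by
    ext n; simp [Odd, eq_comm]
  refine ((i0.hasSum_range_iff.2 h0).add_isCompl ?_ (i1.hasSum_range_iff.2 h1)).tsum_eq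
  rw [e0, e1]
  exact Int.isCompl_even_odd

lemma neg_one_zpow_eq_of_sub {a b d : ℤ} (h : a = b + 2 * d) : (-1 : ℂ) ^ a = (-1) ^ b := by
  rw [h, zpow_add₀ (by norm_num), zpow_mul]; norm_num

/-- `q^{(6n+1)²/24}`, the unsigned term of the pentagonal series of `η`. -/
def etaTerm (τ : ℂ) (n : ℤ) : ℂ := cexp (3 * π * I * τ * (n + 1 / 6) ^ 2)

lemma gTerm_zero (τ : ℂ) (n : ℤ) : gTerm 3 (1 / 6) τ 0 n = (-1) ^ n * etaTerm τ n := by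
  rw [gTerm, etaTerm]
  congr 2
  push_cast; ring

lemma summable_etaTerm {τ : ℂ} (hτ : 0 < τ.im) : Summable (etaTerm τ) := by
  refine Summable.of_norm ((summable_norm_gTerm (A := 3) (c := 1 / 6) (by norm_num)
    (by norm_num [abs_le]) hτ 0).congr fun n => ?_)
  rw [gTerm_zero, norm_mul, norm_zpow, norm_neg, norm_one, one_zpow, one_mul]

lemma tsum_add_two_mul_shift (f : ℤ → ℂ) (a b d : ℤ) (h : a = b + 2 * d) :
    ∑' k, f (2 * k + a) = ∑' k, f (2 * k + b) := by
  rw [← (Equiv.addRight d).tsum_eq (fun k => f (2 * k + b))]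
  refine tsum_congr fun k => ?_
  congr 1
  simp only [Equiv.coe_addRight]
  rw [h]; ring

/-- The indices on the left run over the two parity classes, that of `p` counted positively and the
other negatively, so the difference is `±∑ (-1)^n q^{(6n+1)²/24}`. -/
lemma etaTerm_parity {τ : ℂ} (hτ : 0 < τ.im) (p : ℤ) :
    ∑' k, etaTerm τ (2 * k + p) - ∑' k, etaTerm τ (2 * k + (-p - 1)) =
      (-1) ^ p * gTheta 3 (1 / 6) τ 0 := by
  have hη : gTheta 3 (1 / 6) τ 0
      = ∑' k, etaTerm τ (2 * k + 0) - ∑' k, etaTerm τ (2 * k + 1) := by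
    have hs : Summable (gTerm 3 (1 / 6) τ 0) := Summable.of_norm
      (summable_norm_gTerm (by norm_num) (by norm_num [abs_le]) hτ 0)
    rw [gTheta, tsum_int_even_add_odd hs, sub_eq_add_neg, ← tsum_neg]
    congr 1
    · refine tsum_congr fun k => ?_
      rw [gTerm_zero, neg_one_zpow_eq_of_sub (b := 0) (d := k) (by ring), zpow_zero, one_mul,
        add_zero]
    · refine tsum_congr fun k => ?_
      rw [gTerm_zero, neg_one_zpow_eq_of_sub (b := 1) (d := k) (by ring), zpow_one, neg_one_mul]
  rcases Int.even_or_odd' p with ⟨j, hj | hj⟩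
  · rw [hη, tsum_add_two_mul_shift _ p 0 j (by omega),
      tsum_add_two_mul_shift _ (-p - 1) 1 (-j - 1) (by omega),
      neg_one_zpow_eq_of_sub (b := 0) (d := j) (by omega), zpow_zero, one_mul]
  · rw [hη, tsum_add_two_mul_shift _ p 1 j (by omega),
      tsum_add_two_mul_shift _ (-p - 1) 0 (-j - 1) (by omega),
      neg_one_zpow_eq_of_sub (b := 1) (d := j) (by omega), zpow_one]
    ring

/-- `q^{3(w+2/3)²/8}`: the factor depending on `v` in the product of a term of `ϑ` and a term of the
quintuple series, after the exponent is written as `u²/8 + 3v²/8`. -/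
def crossTerm (τ : ℂ) (w : ℤ) : ℂ := cexp (π * I * τ * (3 / 4) * (w + 2 / 3) ^ 2)

lemma crossTerm_odd (τ : ℂ) (n : ℤ) : crossTerm τ (-2 * n - 1) = etaTerm τ n := by
  rw [crossTerm, etaTerm]
  congr 1
  push_cast; ring

/-- The sum of `crossTerm` over a residue class modulo `4`. -/
def crossSum (τ : ℂ) (u : ℤ) : ℂ := ∑' k : ℤ, crossTerm τ (u - 4 * k)

lemma crossSum_even (τ : ℂ) (j : ℤ) : crossSum τ (-(2 * j)) = crossSum τ (2 * j) := by
  rw [crossSum, crossSum, ← (Equiv.addRight j).tsum_eq (fun k => crossTerm τ (2 * j - 4 * k))]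
  refine tsum_congr fun k => ?_
  congr 1
  simp only [Equiv.coe_addRight]
  ring

lemma crossSum_odd {τ : ℂ} (hτ : 0 < τ.im) (p : ℤ) :
    crossSum τ (-(2 * p + 1)) - crossSum τ (2 * p + 1) = (-1) ^ p * gTheta 3 (1 / 6) τ 0 := by
  rw [← etaTerm_parity hτ, crossSum, crossSum]
  congr 1 <;>
  · refine tsum_congr fun k => ?_
    rw [← crossTerm_odd]
    congr 1
    ring

/-- `q^{u²/8} ζ^u`. -/
def outerTerm (τ z : ℂ) (u : ℤ) : ℂ := cexp (π * I * τ / 4 * u ^ 2 + 2 * π * I * z * u)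

/-- With `x = m + 1/2` and `y = k + 1/6` one has `x²/2 + 3y²/2 = u²/8 + 3v²/8` for `u = x + 3y` and
`v = x - y`; here `m = u - 1 - 3k`. -/
lemma gTerm_mul_pos (τ z : ℂ) (u k : ℤ) :
    gTerm 1 (1 / 2) τ z (u - 1 - 3 * k) * gTerm 3 (1 / 6) τ z k
      = -(-1) ^ u * outerTerm τ z u * crossTerm τ (-u - 4 * (-k)) := by
  have hs : (-1 : ℂ) ^ (u - 1 - 3 * k) * (-1) ^ k = -(-1) ^ u := by
    rw [← zpow_add₀ (by norm_num), neg_one_zpow_eq_of_sub (b := u + 1) (d := -1 - k) (by ring),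
      zpow_add₀ (by norm_num), zpow_one]
    ring
  rw [gTerm, gTerm, mul_mul_mul_comm, hs, ← Complex.exp_add, outerTerm, crossTerm,
    mul_assoc _ (cexp _) (cexp _), ← Complex.exp_add]
  congr 2
  push_cast; ring

/-- The analogue of `gTerm_mul_pos` for `y = k - 1/6`, where `m = u - 3k`. -/
lemma gTerm_mul_neg (τ z : ℂ) (u k : ℤ) :
    gTerm 1 (1 / 2) τ z (u - 3 * k) * gTerm 3 (-1 / 6) τ z k
      = (-1) ^ u * outerTerm τ z u * crossTerm τ (u - 4 * k) := by
  have hs : (-1 : ℂ) ^ (u - 3 * k) * (-1) ^ k = (-1) ^ u := by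
    rw [← zpow_add₀ (by norm_num), neg_one_zpow_eq_of_sub (b := u) (d := - k) (by ring)]
  rw [gTerm, gTerm, mul_mul_mul_comm, hs, ← Complex.exp_add, outerTerm, crossTerm,
    mul_assoc _ (cexp _) (cexp _), ← Complex.exp_add]
  congr 2
  push_cast; ring

/-- The change of summation indices `(u, k) ↦ (u - d - 3k, k)`. -/
def shearEquiv (d : ℤ) : ℤ × ℤ ≃ ℤ × ℤ where
  toFun p := (p.1 - d - 3 * p.2, p.2)
  invFun p := (p.1 + d + 3 * p.2, p.2)
  left_inv p := by ext <;> grind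
  right_inv p := by ext <;> grind

/-- A product of two series, with the terms grouped by `u = m + d + 3k`. -/
lemma hasSum_mul_shear {f g : ℤ → ℂ} (hf : Summable fun n => ‖f n‖) (hg : Summable fun n => ‖g n‖)
    (d : ℤ) : HasSum (fun u : ℤ => ∑' k : ℤ, f (u - d - 3 * k) * g k)
      ((∑' n, f n) * ∑' n, g n) := by
  have h : HasSum (fun p : ℤ × ℤ => f p.1 * g p.2) ((∑' n, f n) * ∑' n, g n) := by
    rw [tsum_mul_tsum_of_summable_norm hf hg]
    exact (summable_mul_of_summable_norm hf hg).hasSum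
  rw [← (shearEquiv d).hasSum_iff] at h
  exact h.prod_fiberwise fun u => (h.summable.prod_factor u).hasSum

/-- The quintuple product identity `ϑ(τ,z) S(τ,z) = η(τ) ϑ(τ,2z)`, with `η` given by its
pentagonal series. The coefficient of `ζ^u` on the left vanishes for even `u`, and for `u = 2p + 1`
it is the pentagonal series up to the factor `(-1)^p q^{u²/8}`. -/
lemma quintuple {τ : ℂ} (hτ : 0 < τ.im) (z : ℂ) :
    gTheta 1 (1 / 2) τ z * (gTheta 3 (1 / 6) τ z + gTheta 3 (-1 / 6) τ z)
      = gTheta 3 (1 / 6) τ 0 * gTheta 1 (1 / 2) τ (2 * z) := by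
  have s0 := summable_norm_gTerm (A := 1) (c := 1 / 2) (by norm_num) (by norm_num [abs_le]) hτ z
  have s1 := summable_norm_gTerm (A := 3) (c := 1 / 6) (by norm_num) (by norm_num [abs_le]) hτ z
  have s2 := summable_norm_gTerm (A := 3) (c := -1 / 6) (by norm_num) (by norm_num [abs_le]) hτ z
  have h := (hasSum_mul_shear s0 s1 1).add (hasSum_mul_shear s0 s2 0)
  have hterm (u : ℤ) : ∑' k : ℤ, gTerm 1 (1 / 2) τ z (u - 1 - 3 * k) * gTerm 3 (1 / 6) τ z k
      + ∑' k : ℤ, gTerm 1 (1 / 2) τ z (u - 0 - 3 * k) * gTerm 3 (-1 / 6) τ z k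
      = (-1) ^ u * outerTerm τ z u * (crossSum τ u - crossSum τ (-u)) := by
    simp only [gTerm_mul_pos, sub_zero, gTerm_mul_neg, tsum_mul_left]
    have hneg := (Equiv.neg ℤ).tsum_eq (fun k => crossTerm τ (-u - 4 * k))
    simp only [Equiv.neg_apply] at hneg
    rw [hneg, crossSum, crossSum]
    ring
  simp only [hterm] at h
  have i1 : Function.Injective fun k : ℤ => 2 * k + 1 := fun a b h => by simpa using h
  rw [← i1.hasSum_iff] at h
  · rw [mul_add]
    refine h.tsum_eq.symm.trans ?_
    rw [gTheta.eq_1 1 (1 / 2) τ (2 * z), ← tsum_mul_left]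
    refine tsum_congr fun p => ?_
    have hc := crossSum_odd hτ p
    have hs : (-1 : ℂ) ^ (2 * p + 1) = -1 := by
      rw [neg_one_zpow_eq_of_sub (b := 1) (d := p) (by ring), zpow_one]
    have he : gTerm 1 (1 / 2) τ (2 * z) p = (-1) ^ p * outerTerm τ z (2 * p + 1) := by
      rw [gTerm, outerTerm]
      congr 2
      push_cast; ring
    simp only [Function.comp_apply, hs, he]
    linear_combination outerTerm τ z (2 * p + 1) * hc
  · intro u hu
    rcases Int.even_or_odd' u with ⟨j, hj | hj⟩
    · rw [hj, crossSum_even, sub_self, mul_zero]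
    · exact absurd ⟨j, hj.symm⟩ hu

/-! ### The eta function -/

open Filter Topology in
/-- Euler's pentagonal number theorem for a complex number in the unit disc. -/
lemma euler_pentagonal {x : ℂ} (hx : ‖x‖ < 1) (hrhs : Summable fun k : ℕ ↦
      (-1) ^ k * (x ^ pentagonal (-k) - x ^ pentagonal (k + 1))) :
    ∏' n : ℕ, (1 - x ^ (n + 1)) =
      ∑' k : ℕ, (-1) ^ k * (x ^ pentagonal (-k) - x ^ pentagonal (k + 1)) := by
  set r := ‖x‖ with hr
  have hr0 : 0 ≤ r := norm_nonneg x
  have hprod (k n : ℕ) : ‖∏ i ∈ Finset.range (n + 1), (1 - x ^ (k + i + 1))‖ ≤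
      rexp (1 - r)⁻¹ := by
    rw [norm_prod]
    calc ∏ i ∈ Finset.range (n + 1), ‖1 - x ^ (k + i + 1)‖
        ≤ ∏ i ∈ Finset.range (n + 1), rexp (r ^ i) := by
          refine Finset.prod_le_prod (fun _ _ => norm_nonneg _) fun i _ => ?_
          have h1 : ‖1 - x ^ (k + i + 1)‖ ≤ 1 + r ^ (k + i + 1) := by
            simpa [hr] using norm_sub_le (1 : ℂ) (x ^ (k + i + 1))
          have h2 : r ^ (k + i + 1) ≤ r ^ i := pow_le_pow_of_le_one hr0 hx.le (by omega)
          linarith [Real.add_one_le_exp (r ^ i)]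
      _ = rexp (∑ i ∈ Finset.range (n + 1), r ^ i) := (Real.exp_sum _ _).symm
      _ ≤ rexp (1 - r)⁻¹ := by
          rw [Real.exp_le_exp, ← tsum_geometric_of_lt_one hr0 hx]
          exact (summable_geometric_of_lt_one hr0 hx).sum_le_tsum _ fun _ _ => by positivity
  have hterm (k n : ℕ) : ‖x ^ ((k + 1) * n) * ∏ i ∈ Finset.range (n + 1), (1 - x ^ (k + i + 1))‖
      ≤ r ^ n * rexp (1 - r)⁻¹ := by
    rw [norm_mul, norm_pow]
    exact mul_le_mul (pow_le_pow_of_le_one hr0 hx.le (Nat.le_mul_of_pos_left n k.succ_pos))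
      (hprod k n) (norm_nonneg _) (by positivity)
  have hgeo : Summable fun n : ℕ => r ^ n * rexp (1 - r)⁻¹ :=
    (summable_geometric_of_lt_one hr0 hx).mul_right _
  refine Pentagonal.tprod_one_sub_pow (tendsto_pow_atTop_nhds_zero_of_norm_lt_one hx)
    (fun k => hgeo.of_norm_bounded (hterm k)) (fun k => ?_) hrhs ?_
  · apply multipliable_one_add_of_summable (f := fun n ↦ -x ^ (n + k + 1))
    simpa [add_assoc] using (summable_nat_add_iff (k + 1)).mpr
      (summable_geometric_of_lt_one (norm_nonneg _) hx)
  · have hbd (k : ℕ) : ‖(-1) ^ (k + 1) * x ^ ((k + 1) * (3 * k + 4) / 2) *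
        ∑' n : ℕ, x ^ ((k + 1) * n) * ∏ i ∈ Finset.range (n + 1), (1 - x ^ (k + i + 1))‖
        ≤ r ^ k * ∑' n : ℕ, r ^ n * rexp (1 - r)⁻¹ := by
      rw [norm_mul, norm_mul, norm_pow, norm_neg, norm_one, one_pow, one_mul, norm_pow]
      refine mul_le_mul (pow_le_pow_of_le_one hr0 hx.le ?_)
        (tsum_of_norm_bounded hgeo.hasSum (hterm k)) (norm_nonneg _) (by positivity)
      rw [Nat.le_div_iff_mul_le two_pos]
      nlinarith
    refine squeeze_zero_norm hbd ?_
    simpa using (tendsto_pow_atTop_nhds_zero_of_lt_one hr0 hx).mul_const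
      (∑' n : ℕ, r ^ n * rexp (1 - r)⁻¹)

lemma Eis2_eq (τ : ℂ) (hτ : 0 < τ.im) : EisensteinSeries.E2 ⟨τ, hτ⟩ = Eis2 τ := by
  rw [EisensteinSeries.E2_eq_tsum_cexp, Eis2]
  congr 2
  rw [tsum_pnat_eq_tsum_succ (f := fun n ↦ (ArithmeticFunction.sigma 1 n : ℂ)
    * cexp (2 * π * I * τ) ^ n)]
  refine tsum_congr fun n => ?_
  rw [ArithmeticFunction.sigma_apply, sigmaD, ← Complex.exp_nat_mul]
  congr 2
  push_cast; ring

/-- The pentagonal number theorem in the form `η = ∑ (-1)^n q^{(6n+1)²/24}`. -/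
lemma eta_eq_gTheta {τ : ℂ} (hτ : 0 < τ.im) : ModularForm.eta τ = gTheta 3 (1 / 6) τ 0 := by
  set x : ℂ := cexp (2 * π * I * τ) with hx
  have hx1 : ‖x‖ < 1 := UpperHalfPlane.norm_exp_two_pi_I_lt_one ⟨τ, hτ⟩
  have hexp (m : ℤ) : cexp (2 * π * I * τ / 24) * x ^ pentagonal (-m) = etaTerm τ m := by
    have hp : (2 : ℂ) * (pentagonal (-m) : ℂ) = m * (3 * m + 1) := by
      exact_mod_cast two_mul_natCast_pentagonal_neg m
    rw [hx, ← Complex.exp_nat_mul, ← Complex.exp_add, etaTerm]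
    congr 1
    linear_combination (π * I * τ) * hp
  have hs : HasSum (gTerm 3 (1 / 6) τ 0) (gTheta 3 (1 / 6) τ 0) := (Summable.of_norm
      (summable_norm_gTerm (by norm_num) (by norm_num [abs_le]) hτ 0)).hasSum
  have h1 := hs.nat_add_neg_add_one
  have hterm (k : ℕ) : gTerm 3 (1 / 6) τ 0 k + gTerm 3 (1 / 6) τ 0 (-(k + 1 : ℤ))
      = cexp (2 * π * I * τ / 24) * ((-1) ^ k * (x ^ pentagonal (-k) - x ^ pentagonal (k + 1))) := by
    have e1 := hexp k
    have e2 := hexp (-(k + 1 : ℤ))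
    rw [neg_neg] at e2
    have hsgn : (-1 : ℂ) ^ (-(k + 1 : ℤ)) = -(-1) ^ k := by
      rw [neg_one_zpow_eq_of_sub (b := (k : ℤ) + 1) (d := -k - 1) (by ring),
        zpow_add₀ (by norm_num), zpow_one, zpow_natCast]
      ring
    rw [gTerm_zero, gTerm_zero, ← e1, ← e2, hsgn, zpow_natCast]
    ring
  simp only [hterm] at h1
  have hne : cexp (2 * π * I * τ / 24) ≠ 0 := Complex.exp_ne_zero _
  have hsum := (summable_mul_left_iff hne).1 h1.summable
  have hprod := euler_pentagonal hx1 hsum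
  have h2 := h1.tsum_eq
  rw [tsum_mul_left, ← hprod] at h2
  rw [← h2, ModularForm.eta]
  simp only [ModularForm.eta_q_eq_pow, Function.Periodic.qParam, hx]
  norm_num

lemma hasDerivAt_eta {τ : ℂ} (hτ : 0 < τ.im) :
    HasDerivAt ModularForm.eta (π * I / 12 * Eis2 τ * ModularForm.eta τ) τ := by
  have h := ModularForm.logDeriv_eta_eq_E2 ⟨τ, hτ⟩
  rw [Eis2_eq τ hτ, logDeriv_apply, div_eq_iff (ModularForm.eta_ne_zero hτ)] at h
  exact (ModularForm.differentiableAt_eta_of_mem_upperHalfPlaneSet hτ).hasDerivAt.congr_deriv h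

lemma thetaJ_eq_gTheta (τ z : ℂ) : thetaJ τ z = gTheta 1 (1 / 2) τ z := by
  rw [thetaJ, gTheta, ← tsum_mul_left]
  refine tsum_congr fun n => ?_
  have e : gTerm 1 (1 / 2) τ z n = (-1) ^ n * (cexp (π * I * τ / 4) * cexp (π * I * z) *
      cexp (π * I * τ * n * (n + 1)) * cexp (2 * π * I * z * n)) := by
    rw [gTerm, ← Complex.exp_add, ← Complex.exp_add, ← Complex.exp_add]
    congr 2
    push_cast; ring
  rw [e]; ring

/-! ### The quotient of theta series -/

/-- The quintuple product series `S = ∑ (-1)^n (q^{(6n+1)²/24} ζ^{(6n+1)/2} +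
q^{(6n-1)²/24} ζ^{(6n-1)/2})`. -/
def quintSum (τ z : ℂ) : ℂ := gTheta 3 (1 / 6) τ z + gTheta 3 (-1 / 6) τ z

lemma phi032_eq {τ z : ℂ} (hτ : 0 < τ.im) (hθ : thetaJ τ z ≠ 0) :
    phi032 τ z = quintSum τ z / ModularForm.eta τ := by
  rw [phi032, div_eq_div_iff hθ (ModularForm.eta_ne_zero hτ), eta_eq_gTheta hτ, mul_comm,
    thetaJ_eq_gTheta, thetaJ_eq_gTheta, ← quintuple hτ z, quintSum, mul_comm]

/-- `H^{(3/2)}(φ_{0,3/2}) + (1/2)·E₂·φ_{0,3/2} = 0` at every point of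
`ℍ × ℂ` where `ϑ(τ,z) ≠ 0`. -/
theorem statement0 (τ z : ℂ) (hτ : 0 < τ.im) (hθ : thetaJ τ z ≠ 0) :
    heatOp (3/2) phi032 τ z + (1/2) * Eis2 τ * phi032 τ z = 0 := by
  have hη := ModularForm.eta_ne_zero hτ
  have hc1 : |(1 / 6 : ℝ)| ≤ 1 := by norm_num [abs_le]
  have hc2 : |(-1 / 6 : ℝ)| ≤ 1 := by norm_num [abs_le]
  have hc3 : |(1 / 2 : ℝ)| ≤ 1 := by norm_num [abs_le]
  have hz : phi032 τ =ᶠ[nhds z] fun w => quintSum τ w / ModularForm.eta τ := by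
    have hcont : ContinuousAt (thetaJ τ) z := by
      rw [show thetaJ τ = gTheta 1 (1 / 2) τ from funext (thetaJ_eq_gTheta τ)]
      exact (hasDerivAt_gTheta_z one_pos hc3 hτ z).continuousAt
    filter_upwards [hcont.eventually_ne hθ] with w hw using phi032_eq hτ hw
  have ht : (fun t => phi032 t z) =ᶠ[nhds τ] fun t => quintSum t z / ModularForm.eta t := by
    have hcont : ContinuousAt (fun t => thetaJ t z) τ := by
      simp only [thetaJ_eq_gTheta]
      exact (hasDerivAt_gTheta_t one_pos hc3 hτ z).continuousAt
    have him : ∀ᶠ t : ℂ in nhds τ, 0 < t.im :=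
      (isOpen_lt continuous_const Complex.continuous_im).mem_nhds hτ
    filter_upwards [hcont.eventually_ne hθ, him] with t hw him using phi032_eq him hw
  set D : ℂ := deriv (fun t => gTheta 3 (1 / 6) t z) τ + deriv (fun t => gTheta 3 (-1 / 6) t z) τ
    with hD
  have hSt : HasDerivAt (fun t => quintSum t z) D τ :=
    (hasDerivAt_gTheta_t three_pos hc1 hτ z).differentiableAt.hasDerivAt.add
      (hasDerivAt_gTheta_t three_pos hc2 hτ z).differentiableAt.hasDerivAt
  have hdt : deriv (fun t => phi032 t z) τ = (D * ModularForm.eta τ - quintSum τ z *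
      (π * I / 12 * Eis2 τ * ModularForm.eta τ)) / ModularForm.eta τ ^ 2 := by
    rw [ht.deriv_eq]
    exact (hSt.div (hasDerivAt_eta hτ) hη).deriv
  have hdz : deriv (fun w => quintSum τ w / ModularForm.eta τ)
      = fun w => (gTheta' 3 (1 / 6) τ w + gTheta' 3 (-1 / 6) τ w) / ModularForm.eta τ :=
    funext fun w => (((hasDerivAt_gTheta_z three_pos hc1 hτ w).add
      (hasDerivAt_gTheta_z three_pos hc2 hτ w)).div_const _).deriv
  have hdzz : deriv (deriv (phi032 τ)) z = 12 * π * I * D / ModularForm.eta τ := by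
    rw [hz.deriv.deriv_eq, hdz]
    refine ((((gTheta_heat three_pos hc1 hτ z).add
      (gTheta_heat three_pos hc2 hτ z)).div_const _).congr_deriv ?_).deriv
    rw [hD]
    push_cast
    ring
  rw [heatOp, hdt, hdzz, phi032_eq hτ hθ]
  have hπ : (π : ℂ) ≠ 0 := by exact_mod_cast pi_ne_zero
  push_cast
  field_simp
  ring_nf
  simp only [I_sq]
  ring
end
end

section
/- The quintuple product identity for the index-3/2 generator holds: for all τ ∈ ℍ and z ∈ ℂ, η(τ)·ϑ(τ,2z) = ϑ(τ,z) · ∑_{n∈ℤ} χ₁₂(n) q^{n²/24} e^{πinz}, where χ₁₂(n) = 1 if n ≡ ±1 (mod 12), χ₁₂(n) = −1 if n ≡ ±5 (mod 12), and χ₁₂(n) = 0 otherwise (i.e. χ₁₂ is the quadratic Legendre symbol (n/12)). -/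
/-!
After both factors on each side are written as theta series, the identity becomes a comparison of
two double series attached to the quadratic form `t² + tm + m²`.

The pentagonal number theorem gives `2η(τ) = ∑ χ₁₂(n) q^{n²/24}` (`two_mul_etaD`), and `ϑ(τ,z)` is
`∑ χ₄(n) q^{n²/8} ζ^{n/2}` (`thetaJ_eq_tsum`), all sums running over `ℤ`. In the product on the
right-hand side only pairs `(n, m)` of odd integers contribute; put `n = m + 2t`. In the product
`2η(τ)·ϑ(τ,2z)` only pairs `(a, b)` of odd integers contribute; put `a = t - m`, `b = t + m`. Since
`n² + 3m² = a² + 3b² = 4(t² + tm + m²)` and `(n + m)/2 = b = t + m`, both products become sums over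
`(t, m) ∈ ℤ²` of a coefficient times the same exponential, which is symmetric in `t` and `m`.
Symmetrising the right-hand side, the theorem reduces to the congruence identity
`χ₁₂(m + 2t) χ₄(m) + χ₁₂(t + 2m) χ₄(t) = χ₁₂(t - m) χ₄(t + m)` (`chi_identity`).

Mathlib proves the pentagonal number theorem in a topological ring under convergence hypotheses;
these are verified for `|x| < 1` in `tprod_one_sub_pow_complex`.
-/

open Complex Real

noncomputable section

/-- The character `χ₁₂(n) = 1` if `n ≡ ±1 (mod 12)`, `−1` if `n ≡ ±5 (mod 12)`,
`0` otherwise (the Legendre symbol `(n/12)`). -/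
def chi12 (n : ℤ) : ℤ :=
  if n % 12 = 1 ∨ n % 12 = 11 then 1
  else if n % 12 = 5 ∨ n % 12 = 7 then -1
  else 0

/-- The odd character `χ₄` modulo `4` as an integer-valued function on `ℤ`. -/
def chi4 (n : ℤ) : ℤ :=
  if n % 4 = 1 then 1 else if n % 4 = 3 then -1 else 0

/-! ### The two characters -/

lemma chi12_emod (n : ℤ) : chi12 n = chi12 (n % 12) := by
  simp [chi12]

lemma chi4_emod (n : ℤ) : chi4 n = chi4 (n % 12) := by
  simp [chi4, Int.emod_emod_of_dvd n (by norm_num : (4 : ℤ) ∣ 12)]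

/-- The arithmetic core of the identity: symmetrising the coefficients of the right-hand side under
the swap of `t` and `m` produces the coefficients of the left-hand side. -/
lemma chi_identity (t m : ℤ) :
    chi12 (m + 2 * t) * chi4 m + chi12 (t + 2 * m) * chi4 t = chi12 (t - m) * chi4 (t + m) := by
  have key : ∀ r ∈ Finset.Ico (0 : ℤ) 12, ∀ s ∈ Finset.Ico (0 : ℤ) 12,
      chi12 ((s + 2 * r) % 12) * chi4 s + chi12 ((r + 2 * s) % 12) * chi4 r
        = chi12 ((r - s) % 12) * chi4 ((r + s) % 12) := by
    decide
  have h := key (t % 12) (by simp; omega) (m % 12) (by simp; omega)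
  rw [chi12_emod (m + 2 * t), chi12_emod (t + 2 * m), chi12_emod (t - m), chi4_emod (t + m),
    chi4_emod m, chi4_emod t]
  rw [show (m + 2 * t) % 12 = (m % 12 + 2 * (t % 12)) % 12 by omega,
    show (t + 2 * m) % 12 = (t % 12 + 2 * (m % 12)) % 12 by omega,
    show (t - m) % 12 = (t % 12 - m % 12) % 12 by omega,
    show (t + m) % 12 = (t % 12 + m % 12) % 12 by omega]
  exact h

lemma norm_chi12_le (n : ℤ) : ‖(chi12 n : ℂ)‖ ≤ 1 := by
  unfold chi12; split_ifs <;> simp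

lemma norm_chi4_le (n : ℤ) : ‖(chi4 n : ℂ)‖ ≤ 1 := by
  unfold chi4; split_ifs <;> simp

lemma chi4_two_mul_add_one (n : ℤ) : (chi4 (2 * n + 1) : ℂ) = (-1) ^ n := by
  rcases Int.even_or_odd n with h | h
  · rw [h.neg_one_zpow, chi4, if_pos (by obtain ⟨k, rfl⟩ := h; omega)]; simp
  · rw [h.neg_one_zpow, chi4, if_neg (by obtain ⟨k, rfl⟩ := h; omega),
      if_pos (by obtain ⟨k, rfl⟩ := h; omega)]; simp

lemma chi4_eq_zero_of_even {n : ℤ} (h : Even n) : chi4 n = 0 := by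
  obtain ⟨k, rfl⟩ := h
  rw [chi4, if_neg (by omega), if_neg (by omega)]

lemma chi12_eq_zero_of_even {n : ℤ} (h : Even n) : chi12 n = 0 := by
  obtain ⟨k, rfl⟩ := h
  rw [chi12, if_neg (by omega), if_neg (by omega)]

lemma chi12_neg (n : ℤ) : chi12 (-n) = chi12 n := by
  unfold chi12
  have h1 : (-n % 12 = 1 ∨ -n % 12 = 11) ↔ (n % 12 = 1 ∨ n % 12 = 11) := by omega
  have h2 : (-n % 12 = 5 ∨ -n % 12 = 7) ↔ (n % 12 = 5 ∨ n % 12 = 7) := by omega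
  simp only [h1, h2]

lemma chi12_six_mul_add_one (k : ℕ) : (chi12 (1 + 6 * k) : ℂ) = (-1) ^ k := by
  rcases Nat.even_or_odd k with h | h
  · rw [h.neg_one_pow, chi12, if_pos (by obtain ⟨k, rfl⟩ := h; omega)]; simp
  · rw [h.neg_one_pow, chi12, if_neg (by obtain ⟨k, rfl⟩ := h; omega),
      if_pos (by obtain ⟨k, rfl⟩ := h; omega)]; simp

lemma chi12_six_mul_add_five (k : ℕ) : (chi12 (5 + 6 * k) : ℂ) = -(-1) ^ k := by
  rcases Nat.even_or_odd k with h | h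
  · rw [h.neg_one_pow, chi12, if_neg (by obtain ⟨k, rfl⟩ := h; omega),
      if_pos (by obtain ⟨k, rfl⟩ := h; omega)]; simp
  · rw [h.neg_one_pow, chi12, if_pos (by obtain ⟨k, rfl⟩ := h; omega)]; simp

/-! ### Euler's pentagonal number theorem over `ℂ` -/

lemma norm_prod_one_sub_pow_le {x : ℂ} (hx : ‖x‖ < 1) (k n : ℕ) :
    ‖∏ i ∈ Finset.range n, (1 - x ^ (k + i + 1))‖ ≤ Real.exp (1 - ‖x‖)⁻¹ := by
  have hg := summable_geometric_of_lt_one (norm_nonneg x) hx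
  calc ‖∏ i ∈ Finset.range n, (1 - x ^ (k + i + 1))‖
      = ∏ i ∈ Finset.range n, ‖1 - x ^ (k + i + 1)‖ := norm_prod _ _
    _ ≤ ∏ i ∈ Finset.range n, Real.exp (‖x‖ ^ i) := by
        refine Finset.prod_le_prod (fun _ _ => norm_nonneg _) fun i _ => ?_
        have h1 : ‖1 - x ^ (k + i + 1)‖ ≤ 1 + ‖x‖ ^ (k + i + 1) := by
          simpa using norm_sub_le (1 : ℂ) (x ^ (k + i + 1))
        have h2 : ‖x‖ ^ (k + i + 1) ≤ ‖x‖ ^ i :=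
          pow_le_pow_of_le_one (norm_nonneg x) hx.le (by omega)
        linarith [Real.add_one_le_exp (‖x‖ ^ i)]
    _ = Real.exp (∑ i ∈ Finset.range n, ‖x‖ ^ i) := (Real.exp_sum _ _).symm
    _ ≤ Real.exp (1 - ‖x‖)⁻¹ := by
        rw [Real.exp_le_exp, ← tsum_geometric_of_lt_one (norm_nonneg x) hx]
        exact hg.sum_le_tsum _ fun i _ => by positivity

/-- Euler's pentagonal number theorem for a complex number of absolute value less than `1`. -/
lemma tprod_one_sub_pow_complex {x : ℂ} (hx : ‖x‖ < 1) :
    ∏' n : ℕ, (1 - x ^ (n + 1)) =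
      ∑' k : ℕ, (-1) ^ k * (x ^ pentagonal (-k) - x ^ pentagonal (k + 1)) := by
  have hg := summable_geometric_of_lt_one (norm_nonneg x) hx
  set M := Real.exp (1 - ‖x‖)⁻¹ with hM
  have hterm (k n : ℕ) :
      ‖x ^ ((k + 1) * n) * ∏ i ∈ Finset.range (n + 1), (1 - x ^ (k + i + 1))‖ ≤ ‖x‖ ^ n * M := by
    rw [norm_mul, norm_pow]
    gcongr ?_ * ?_
    · exact pow_le_pow_of_le_one (norm_nonneg x) hx.le (by nlinarith)
    · exact norm_prod_one_sub_pow_le hx k _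
  have hle {a b : ℕ} (h : a ≤ b) : ‖x ^ b‖ ≤ ‖x‖ ^ a := by
    rw [norm_pow]; exact pow_le_pow_of_le_one (norm_nonneg x) hx.le h
  refine Pentagonal.tprod_one_sub_pow ?_ ?_ ?_ ?_ ?_
  · exact tendsto_pow_atTop_nhds_zero_of_norm_lt_one hx
  · exact fun k => (hg.mul_right M).of_norm_bounded (hterm k)
  · intro k
    simp_rw [sub_eq_add_neg]
    refine multipliable_one_add_of_summable ?_
    refine hg.of_nonneg_of_le (fun _ => norm_nonneg _) fun n => ?_
    rw [norm_neg]
    exact hle (by omega)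
  · refine (hg.mul_left 2).of_norm_bounded fun k => ?_
    have h1 : k ≤ pentagonal (-k) := by
      have := two_mul_natCast_pentagonal_neg k
      zify; nlinarith
    have h2 : k ≤ pentagonal (k + 1) := by
      have := two_mul_natCast_pentagonal (k + 1)
      zify; nlinarith
    calc _ = ‖x ^ pentagonal (-k) - x ^ pentagonal (k + 1)‖ := by simp
      _ ≤ ‖x ^ pentagonal (-k)‖ + ‖x ^ pentagonal (k + 1)‖ := norm_sub_le _ _
      _ ≤ 2 * ‖x‖ ^ k := by linarith [hle h1, hle h2]
  · have hlim : Filter.Tendsto (fun k : ℕ => ‖x‖ ^ k * ∑' n : ℕ, ‖x‖ ^ n * M)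
        Filter.atTop (nhds 0) := by
      simpa using (tendsto_pow_atTop_nhds_zero_of_lt_one (norm_nonneg x) hx).mul_const
        (∑' n : ℕ, ‖x‖ ^ n * M)
    refine squeeze_zero_norm (fun k => ?_) hlim
    rw [norm_mul, norm_mul, norm_pow, norm_neg, norm_one, one_pow, one_mul]
    gcongr ?_ * ?_
    · refine hle ?_
      rw [Nat.le_div_iff_mul_le two_pos]
      nlinarith
    · exact tsum_of_norm_bounded (hg.mul_right M).hasSum (hterm k)

/-! ### Series expansions of `ϑ` and `η` -/

/-- The general term of the theta series with coefficients `χ₁₂`. -/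
def term12 (τ z : ℂ) (n : ℤ) : ℂ :=
  (chi12 n : ℂ) * Complex.exp (2 * π * I * τ * n ^ 2 / 24) * Complex.exp (π * I * n * z)

/-- The general term of the theta series with coefficients `χ₄`. -/
def term4 (τ z : ℂ) (n : ℤ) : ℂ :=
  (chi4 n : ℂ) * Complex.exp (π * I * τ * n ^ 2 / 4) * Complex.exp (π * I * n * z)

lemma summable_norm_term12 {τ : ℂ} (hτ : 0 < τ.im) (z : ℂ) :
    Summable fun n => ‖term12 τ z n‖ := by
  have h : 0 < (τ / 12).im := by
    rw [show τ / 12 = τ / (12 : ℝ) by norm_num, Complex.div_ofReal_im]; positivity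
  refine ((summable_jacobiTheta₂_term_iff (z / 2) (τ / 12)).2 h).norm.of_nonneg_of_le
    (fun _ => norm_nonneg _) fun n => ?_
  rw [term12, mul_assoc, ← Complex.exp_add, norm_mul, jacobiTheta₂_term]
  rw [show 2 * π * I * n * (z / 2) + π * I * n ^ 2 * (τ / 12)
    = 2 * π * I * τ * n ^ 2 / 24 + π * I * n * z by ring]
  exact mul_le_of_le_one_left (norm_nonneg _) (norm_chi12_le n)

lemma summable_norm_term4 {τ : ℂ} (hτ : 0 < τ.im) (z : ℂ) :
    Summable fun n => ‖term4 τ z n‖ := by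
  have h : 0 < (τ / 4).im := by
    rw [show τ / 4 = τ / (4 : ℝ) by norm_num, Complex.div_ofReal_im]; positivity
  refine ((summable_jacobiTheta₂_term_iff (z / 2) (τ / 4)).2 h).norm.of_nonneg_of_le
    (fun _ => norm_nonneg _) fun n => ?_
  rw [term4, mul_assoc, ← Complex.exp_add, norm_mul, jacobiTheta₂_term]
  rw [show 2 * π * I * n * (z / 2) + π * I * n ^ 2 * (τ / 4)
    = π * I * τ * n ^ 2 / 4 + π * I * n * z by ring]
  exact mul_le_of_le_one_left (norm_nonneg _) (norm_chi4_le n)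

lemma thetaJ_eq_tsum (τ z : ℂ) : thetaJ τ z = ∑' n : ℤ, term4 τ z n := by
  have hinj : Function.Injective (fun n : ℤ => 2 * n + 1) := fun a b h => by
    simp only at h; omega
  rw [← hinj.tsum_eq, thetaJ, ← tsum_mul_left]
  · refine tsum_congr fun n => ?_
    rw [term4, chi4_two_mul_add_one]
    have : Complex.exp (π * I * τ * ((2 * n + 1 : ℤ) : ℂ) ^ 2 / 4)
          * Complex.exp (π * I * ((2 * n + 1 : ℤ) : ℂ) * z)
        = Complex.exp (π * I * τ / 4) * Complex.exp (π * I * z) *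
          (Complex.exp (π * I * τ * n * (n + 1)) * Complex.exp (2 * π * I * z * n)) := by
      simp only [← Complex.exp_add]
      congr 1; push_cast; ring
    linear_combination (-(-1 : ℂ) ^ n) * this
  · intro n hn
    rcases Int.even_or_odd n with h | ⟨k, rfl⟩
    · exact absurd (by simp [term4, chi4_eq_zero_of_even h]) hn
    · exact ⟨k, rfl⟩

/-- `2η(τ) = ∑ χ₁₂(n) q^{n²/24}` over all integers `n`: the pentagonal number theorem, with the
exponents completed to squares and the terms `n` and `-n` both counted. -/
lemma two_mul_etaD {τ : ℂ} (hτ : 0 < τ.im) : 2 * etaD τ = ∑' n : ℤ, term12 τ 0 n := by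
  have hs : Summable (term12 τ 0) := (summable_norm_term12 hτ 0).of_norm
  have hsN : Summable fun n : ℕ => term12 τ 0 n := hs.comp_injective Nat.cast_injective
  have hzero : term12 τ 0 0 = 0 := by simp [term12, chi12]
  have hneg (n : ℤ) : term12 τ 0 (-n) = term12 τ 0 n := by simp [term12, chi12_neg]
  have h2 : ∑' n : ℤ, term12 τ 0 n = 2 * ∑' n : ℕ, term12 τ 0 n := by
    have h := HasSum.of_nat_of_neg (f := term12 τ 0) hsN.hasSum
      (by simpa only [hneg] using hsN.hasSum)
    rw [h.tsum_eq, hzero]; ring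
  rw [h2]
  congr 1
  set x := Complex.exp (2 * π * I * τ) with hxdef
  have hx : ‖x‖ < 1 := by
    rw [hxdef, Complex.norm_exp, Real.exp_lt_one_iff]
    have : 0 < π * τ.im := mul_pos Real.pi_pos hτ
    simp
    linarith
  have hprod : ∏' n : ℕ, (1 - Complex.exp (2 * π * I * τ * (n + 1)))
      = ∏' n : ℕ, (1 - x ^ (n + 1)) := by
    refine tprod_congr fun n => ?_
    rw [hxdef, ← Complex.exp_nat_mul]
    congr 2; push_cast; ring
  rw [etaD, hprod, tprod_one_sub_pow_complex hx, Nat.sumByResidueClasses hsN 6, ← tsum_mul_left]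
  have hvanish (j k : ℕ) (hj : j = 0 ∨ j = 2 ∨ j = 3 ∨ j = 4) :
      term12 τ 0 ((j + 6 * k : ℕ) : ℤ) = 0 := by
    have : chi12 ((j + 6 * k : ℕ) : ℤ) = 0 := by
      rw [chi12, if_neg (by omega), if_neg (by omega)]
    rw [term12, this]; simp
  have hinj (j : ℕ) : Function.Injective (fun k : ℕ => j + 6 * k) := fun a b h => by
    simp only at h; omega
  have hexpand : ∀ f : ZMod 6 → ℂ, ∑ j, f j = f 0 + f 1 + f 2 + f 3 + f 4 + f 5 :=
    fun f => Fin.sum_univ_six f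
  rw [hexpand]
  simp only [show (0 : ZMod 6).val = 0 from rfl, show (1 : ZMod 6).val = 1 from rfl,
    show (2 : ZMod 6).val = 2 from rfl, show (3 : ZMod 6).val = 3 from rfl,
    show (4 : ZMod 6).val = 4 from rfl, show (5 : ZMod 6).val = 5 from rfl]
  simp only [hvanish 0 _ (by simp), hvanish 2 _ (by simp), hvanish 3 _ (by simp),
    hvanish 4 _ (by simp), tsum_zero]
  rw [zero_add, add_zero, add_zero, add_zero]
  refine Eq.trans ?_
    ((hsN.comp_injective (hinj 1)).tsum_add (hsN.comp_injective (hinj 5)))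
  refine tsum_congr fun k => ?_
  have e1 : Complex.exp (π * I * τ / 12) * x ^ pentagonal (-k)
      = Complex.exp (2 * π * I * τ * (1 + 6 * k) ^ 2 / 24) := by
    have h : (2 * (pentagonal (-k) : ℂ)) = k * (3 * k + 1) := by
      exact_mod_cast two_mul_natCast_pentagonal_neg k
    rw [hxdef, ← Complex.exp_nat_mul, ← Complex.exp_add]
    congr 1
    linear_combination (π * I * τ) * h
  have e2 : Complex.exp (π * I * τ / 12) * x ^ pentagonal (k + 1)
      = Complex.exp (2 * π * I * τ * (5 + 6 * k) ^ 2 / 24) := by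
    have h : (2 * (pentagonal (k + 1) : ℂ)) = (k + 1) * (3 * (k + 1) - 1) := by
      exact_mod_cast two_mul_natCast_pentagonal (k + 1)
    rw [hxdef, ← Complex.exp_nat_mul, ← Complex.exp_add]
    congr 1
    linear_combination (π * I * τ) * h
  have c1 := chi12_six_mul_add_one k
  have c5 := chi12_six_mul_add_five k
  simp only [term12, Function.comp]
  push_cast
  rw [c1, c5, mul_zero, mul_zero, Complex.exp_zero]
  linear_combination (-1 : ℂ) ^ k * e1 - (-1 : ℂ) ^ k * e2

/-! ### The double series -/

/-- the quintuple product identity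
`η(τ)·ϑ(τ,2z) = ϑ(τ,z) · ∑_{n∈ℤ} χ₁₂(n) q^{n²/24} e^{πinz}`. -/
theorem statement1 (τ z : ℂ) (hτ : 0 < τ.im) :
    etaD τ * thetaJ τ (2 * z) =
      thetaJ τ z *
        ∑' n : ℤ, (chi12 n : ℂ) * Complex.exp (2 * π * I * τ * n ^ 2 / 24) *
          Complex.exp (π * I * n * z) := by
  have s12 := summable_norm_term12 hτ
  have s4 := summable_norm_term4 hτ
  -- The common exponential factor; it is symmetric in `t` and `m`.
  let F : ℤ × ℤ → ℂ := fun p =>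
    Complex.exp (π * I * τ * (p.1 ^ 2 + p.1 * p.2 + p.2 ^ 2) / 3 + 2 * π * I * (p.1 + p.2) * z)
  let K : ℤ × ℤ → ℂ := fun p => (chi12 (p.2 + 2 * p.1) * chi4 p.2 : ℤ) * F p
  have hR : Summable fun p : ℤ × ℤ => term12 τ z p.1 * term4 τ z p.2 :=
    summable_mul_of_summable_norm (s12 z) (s4 z)
  have inj1 : Function.Injective (fun p : ℤ × ℤ => (p.2 + 2 * p.1, p.2)) := by
    rintro ⟨a, b⟩ ⟨c, d⟩ h
    simp only [Prod.mk.injEq] at h ⊢; omega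
  have inj2 : Function.Injective (fun p : ℤ × ℤ => (p.1 - p.2, p.1 + p.2)) := by
    rintro ⟨a, b⟩ ⟨c, d⟩ h
    simp only [Prod.mk.injEq] at h ⊢; omega
  have hK (p : ℤ × ℤ) : term12 τ z (p.2 + 2 * p.1) * term4 τ z p.2 = K p := by
    have : Complex.exp (2 * π * I * τ * ((p.2 + 2 * p.1 : ℤ) : ℂ) ^ 2 / 24)
          * Complex.exp (π * I * ((p.2 + 2 * p.1 : ℤ) : ℂ) * z)
          * (Complex.exp (π * I * τ * (p.2 : ℂ) ^ 2 / 4) * Complex.exp (π * I * p.2 * z))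
        = F p := by
      simp only [F, ← Complex.exp_add]
      congr 1; push_cast; ring
    simp only [K, ← this, term12, term4]
    push_cast; ring
  have hL (p : ℤ × ℤ) : term12 τ 0 (p.1 - p.2) * term4 τ (2 * z) (p.1 + p.2)
      = (chi12 (p.1 - p.2) * chi4 (p.1 + p.2) : ℤ) * F p := by
    have : Complex.exp (2 * π * I * τ * ((p.1 - p.2 : ℤ) : ℂ) ^ 2 / 24)
          * (Complex.exp (π * I * τ * ((p.1 + p.2 : ℤ) : ℂ) ^ 2 / 4)
            * Complex.exp (π * I * ((p.1 + p.2 : ℤ) : ℂ) * (2 * z)))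
        = F p := by
      simp only [F, ← Complex.exp_add]
      congr 1; push_cast; ring
    simp only [← this, term12, term4, mul_zero, Complex.exp_zero]
    push_cast; ring
  have sK : Summable K := (hR.comp_injective inj1).congr fun p => hK p
  have rhs : thetaJ τ z * ∑' n : ℤ, term12 τ z n = ∑' p, K p := by
    rw [mul_comm, thetaJ_eq_tsum, tsum_mul_tsum_of_summable_norm (s12 z) (s4 z), ← inj1.tsum_eq]
    · exact tsum_congr hK
    · rintro ⟨n, m⟩ hp
      rcases Int.even_or_odd n with hn | ⟨i, rfl⟩
      · exact absurd (by simp [term12, chi12_eq_zero_of_even hn]) hp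
      rcases Int.even_or_odd m with hm | ⟨j, rfl⟩
      · exact absurd (by simp [term4, chi4_eq_zero_of_even hm]) hp
      · exact ⟨(i - j, 2 * j + 1), by simp; ring⟩
  have lhs : 2 * etaD τ * thetaJ τ (2 * z)
      = ∑' p : ℤ × ℤ, (chi12 (p.1 - p.2) * chi4 (p.1 + p.2) : ℤ) * F p := by
    rw [two_mul_etaD hτ, thetaJ_eq_tsum, tsum_mul_tsum_of_summable_norm (s12 0) (s4 (2 * z)),
      ← inj2.tsum_eq]
    · exact tsum_congr hL
    · rintro ⟨n, m⟩ hp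
      rcases Int.even_or_odd n with hn | ⟨i, rfl⟩
      · exact absurd (by simp [term12, chi12_eq_zero_of_even hn]) hp
      rcases Int.even_or_odd m with hm | ⟨j, rfl⟩
      · exact absurd (by simp [term4, chi4_eq_zero_of_even hm]) hp
      · exact ⟨(i + j + 1, j - i), by simp; constructor <;> ring⟩
  have swap : ∑' p, K p = ∑' p : ℤ × ℤ, K p.swap := ((Equiv.prodComm ℤ ℤ).tsum_eq K).symm
  have sK' : Summable fun p : ℤ × ℤ => K p.swap := (Equiv.prodComm ℤ ℤ).summable_iff.2 sK
  have sym : 2 * ∑' p, K p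
      = ∑' p : ℤ × ℤ, (chi12 (p.1 - p.2) * chi4 (p.1 + p.2) : ℤ) * F p := by
    rw [two_mul]
    nth_rewrite 2 [swap]
    rw [← sK.tsum_add sK']
    refine tsum_congr fun p => ?_
    have hF : F p.swap = F p := by
      simp only [F, Prod.fst_swap, Prod.snd_swap]
      congr 1; ring
    simp only [K, hF, Prod.fst_swap, Prod.snd_swap]
    rw [← chi_identity]
    push_cast; ring
  change etaD τ * thetaJ τ (2 * z) = thetaJ τ z * ∑' n : ℤ, term12 τ z n
  rw [rhs]
  refine mul_left_cancel₀ (two_ne_zero (α := ℂ)) ?_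
  rw [sym, ← lhs, mul_assoc]
end
end
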